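/- arXiv:math/0405592 — 3 statements merged into one kernel-verified Lean document; each statement's English description precedes it below -/
import Mathlib

section
/- ∑_{n=1}^∞ 1/n³ = (5/2) · ∑_{n=1}^∞ (−1)^{n−1} / (C(2n,n) · n³), where C(2n,n) is the central binomial coefficient. -/
open Finset Filter Topology Nat

/-- The remainder terms `(-1)^k / (2 k³ C(N+k,k) C(N,k))` with `k = j + 1`. -/
noncomputable def aperyRemainderTerm (N j : ℕ) : ℝ :=
  (-1) ^ (j + 1) * ((j + 1)! : ℝ) ^ 2 * ((N - (j + 1))! : ℝ) /
    (2 * ((j : ℝ) + 1) ^ 3 * ((N + (j + 1))! : ℝ))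

/-- The antidifference in `k` of the `N`-increments of `aperyRemainderTerm`. -/
noncomputable def aperyAntidifference (N k : ℕ) : ℝ :=
  (-1) ^ k * (k ! : ℝ) ^ 2 * ((N - k)! : ℝ) / (((N : ℝ) + 1) ^ 2 * ((N + 1 + k)! : ℝ))

theorem aperyRemainderTerm_succ_sub {N j : ℕ} (h : j < N) :
    aperyRemainderTerm (N + 1) j - aperyRemainderTerm N j =
      aperyAntidifference N j - aperyAntidifference N (j + 1) := by
  obtain ⟨d, rfl⟩ := Nat.exists_eq_add_of_lt h
  unfold aperyRemainderTerm aperyAntidifference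
  have e1 : j + d + 1 + 1 - (j + 1) = d + 1 := by omega
  have e2 : j + d + 1 - (j + 1) = d := by omega
  have e3 : j + d + 1 - j = d + 1 := by omega
  have e4 : j + d + 1 + 1 + (j + 1) = (j + d + 1 + (j + 1)) + 1 := by omega
  have e5 : j + d + 1 + 1 + j = j + d + 1 + (j + 1) := by omega
  rw [e1, e2, e3, e4, e5, Nat.factorial_succ (j + d + 1 + (j + 1)), Nat.factorial_succ d,
    Nat.factorial_succ j]
  have hf : ((j + d + 1 + (j + 1))! : ℝ) ≠ 0 := by positivity
  generalize ((j + d + 1 + (j + 1))! : ℕ) = F at *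
  have h1 : (j : ℝ) + 1 ≠ 0 := by positivity
  have h2 : (j : ℝ) + d + 1 + 1 ≠ 0 := by positivity
  have h3 : (j : ℝ) + d + 1 + (j + 1) + 1 ≠ 0 := by positivity
  push_cast
  field_simp
  ring

theorem sum_aperyRemainderTerm_succ_sub (N : ℕ) :
    ∑ j ∈ range N, (aperyRemainderTerm (N + 1) j - aperyRemainderTerm N j) =
      aperyAntidifference N 0 - aperyAntidifference N N := by
  rw [sum_congr rfl fun j hj => aperyRemainderTerm_succ_sub (mem_range.mp hj), sum_range_sub']

theorem centralBinom_succ_cast (N : ℕ) :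
    (Nat.choose (2 * (N + 1)) (N + 1) : ℝ) = ((2 * N + 2)! : ℝ) / ((N + 1)! : ℝ) ^ 2 := by
  rw [Nat.cast_choose ℝ (by omega), show 2 * (N + 1) - (N + 1) = N + 1 by omega, sq, mul_add,
    mul_one]

theorem sum_inv_cube_sub_apery_partial_sum (N : ℕ) :
    ∑ n ∈ range N, 1 / ((n : ℝ) + 1) ^ 3 -
      (5 / 2) * ∑ n ∈ range N, (-1 : ℝ) ^ n /
        ((Nat.choose (2 * (n + 1)) (n + 1) : ℝ) * ((n : ℝ) + 1) ^ 3) =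
      ∑ j ∈ range N, aperyRemainderTerm N j := by
  induction N with
  | zero => simp
  | succ N ih =>
    have key := sum_aperyRemainderTerm_succ_sub N
    rw [sum_sub_distrib] at key
    have boundary : 1 / ((N : ℝ) + 1) ^ 3 - (5 / 2) * ((-1 : ℝ) ^ N /
        ((Nat.choose (2 * (N + 1)) (N + 1) : ℝ) * ((N : ℝ) + 1) ^ 3)) =
        aperyAntidifference N 0 - aperyAntidifference N N + aperyRemainderTerm (N + 1) N := by
      rw [centralBinom_succ_cast]
      unfold aperyRemainderTerm aperyAntidifference
      rw [show N + 1 + (N + 1) = (2 * N + 1) + 1 by omega, show N + 1 + N = 2 * N + 1 by omega,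
        show 2 * N + 2 = (2 * N + 1) + 1 by omega, Nat.factorial_succ (2 * N + 1)]
      simp only [Nat.sub_self, Nat.sub_zero, Nat.add_zero, Nat.factorial_succ N,
        Nat.factorial_zero]
      have hf : ((2 * N + 1)! : ℝ) ≠ 0 := by positivity
      have hN : (N ! : ℝ) ≠ 0 := by positivity
      generalize ((2 * N + 1)! : ℕ) = F at *
      have h1 : (N : ℝ) + 1 ≠ 0 := by positivity
      push_cast
      have h2 : 2 * (N : ℝ) + 1 + 1 ≠ 0 := by positivity
      field_simp
      ring
    rw [sum_range_succ, sum_range_succ, sum_range_succ]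
    linarith

theorem factorial_mul_factorial_succ_le (N j : ℕ) :
    (j + 1)! * (N + 1)! ≤ (N + (j + 1))! := by
  induction j with
  | zero => simp
  | succ j ih =>
    rw [Nat.factorial_succ (j + 1), ← Nat.add_assoc N, Nat.factorial_succ, Nat.mul_assoc]
    exact Nat.mul_le_mul (by omega) ih

theorem abs_aperyRemainderTerm_le {N j : ℕ} (h : j < N) :
    |aperyRemainderTerm N j| ≤ 1 / ((j : ℝ) + 1) ^ 3 * (1 / ((N : ℝ) + 1)) := by
  have hle : (j + 1)! ^ 2 * (N - (j + 1))! * (N + 1) ≤ (N + (j + 1))! := by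
    calc (j + 1)! ^ 2 * (N - (j + 1))! * (N + 1)
        = (j + 1)! * ((N + 1) * ((j + 1)! * (N - (j + 1))!)) := by ring
      _ ≤ (j + 1)! * ((N + 1) * N !) := by
          gcongr
          exact Nat.le_of_dvd N.factorial_pos (Nat.factorial_mul_factorial_dvd_factorial h)
      _ ≤ (N + (j + 1))! := by
          rw [← Nat.factorial_succ]
          exact factorial_mul_factorial_succ_le N j
  have hle' : ((j + 1)! : ℝ) ^ 2 * ((N - (j + 1))! : ℝ) * ((N : ℝ) + 1) ≤
      ((N + (j + 1))! : ℝ) := by exact_mod_cast hle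
  unfold aperyRemainderTerm
  rw [abs_div, abs_mul, abs_mul, abs_pow, abs_neg, abs_one, one_pow, one_mul,
    abs_of_pos (by positivity : (0 : ℝ) < ((j + 1)! : ℝ) ^ 2),
    abs_of_pos (by positivity : (0 : ℝ) < ((N - (j + 1))! : ℝ)),
    abs_of_pos (by positivity : (0 : ℝ) < 2 * ((j : ℝ) + 1) ^ 3 * ((N + (j + 1))! : ℝ)),
    one_div_mul_one_div, div_le_div_iff₀ (by positivity) (by positivity)]
  have hc : (0 : ℝ) < ((j : ℝ) + 1) ^ 3 := by positivity
  have hF : (0 : ℝ) < ((N + (j + 1))! : ℝ) := by positivity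
  nlinarith [mul_le_mul_of_nonneg_left hle' hc.le, mul_pos hc hF]

theorem summable_one_div_succ_cube : Summable fun n : ℕ => 1 / ((n : ℝ) + 1) ^ 3 := by
  have h := (summable_nat_add_iff 1).mpr
    (Real.summable_one_div_nat_pow.mpr (by norm_num : 1 < 3))
  simpa using h

theorem tendsto_sum_aperyRemainderTerm :
    Tendsto (fun N => ∑ j ∈ range N, aperyRemainderTerm N j) atTop (𝓝 0) := by
  have hlim := (tendsto_one_div_add_atTop_nhds_zero_nat (𝕜 := ℝ)).const_mul
    (∑' n : ℕ, 1 / ((n : ℝ) + 1) ^ 3)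
  rw [mul_zero] at hlim
  refine squeeze_zero_norm (fun N => ?_) hlim
  calc ‖∑ j ∈ range N, aperyRemainderTerm N j‖
      ≤ ∑ j ∈ range N, 1 / ((j : ℝ) + 1) ^ 3 * (1 / ((N : ℝ) + 1)) :=
        norm_sum_le_of_le _ fun j hj => abs_aperyRemainderTerm_le (mem_range.mp hj)
    _ = (∑ j ∈ range N, 1 / ((j : ℝ) + 1) ^ 3) * (1 / ((N : ℝ) + 1)) := by rw [sum_mul]
    _ ≤ (∑' n : ℕ, 1 / ((n : ℝ) + 1) ^ 3) * (1 / ((N : ℝ) + 1)) := by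
        gcongr
        exact summable_one_div_succ_cube.sum_le_tsum _ fun n _ => by positivity

theorem summable_apery_series : Summable fun n : ℕ => (-1 : ℝ) ^ n /
    ((Nat.choose (2 * (n + 1)) (n + 1) : ℝ) * ((n : ℝ) + 1) ^ 3) := by
  refine Summable.of_norm_bounded summable_one_div_succ_cube fun n => ?_
  have hc : (1 : ℝ) ≤ (Nat.choose (2 * (n + 1)) (n + 1) : ℝ) := by
    exact_mod_cast Nat.choose_pos (by omega : n + 1 ≤ 2 * (n + 1))
  have hn : (0 : ℝ) < ((n : ℝ) + 1) ^ 3 := by positivity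
  rw [norm_div, norm_pow, norm_neg, norm_one, one_pow, Real.norm_of_nonneg (by positivity)]
  exact one_div_le_one_div_of_le hn (le_mul_of_one_le_left hn.le hc)

theorem apery_series_zeta_three :
    (∑' n : ℕ, 1 / ((n : ℝ) + 1) ^ 3)
      = (5 / 2) * ∑' n : ℕ, (-1 : ℝ) ^ n /
          ((Nat.choose (2 * (n + 1)) (n + 1) : ℝ) * ((n : ℝ) + 1) ^ 3) := by
  have hlim := summable_one_div_succ_cube.hasSum.tendsto_sum_nat.sub
    (summable_apery_series.hasSum.tendsto_sum_nat.const_mul (5 / 2))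
  simp only [sum_inv_cube_sub_apery_partial_sum] at hlim
  exact sub_eq_zero.mp (tendsto_nhds_unique hlim tendsto_sum_aperyRemainderTerm)
end

section
/- ∑_{n=1}^∞ 1/n³ = ∑_{n=0}^∞ (−1)^n · (n!)^{10} · (205n² + 250n + 77) / (64 · ((2n+1)!)^5). -/
namespace AmdeberhanZeilberger

open Filter Topology

/-- The hypergeometric kernel `n!⁶ (n+k)!⁴ / ((2n)! (2n+k+1)!⁴)`. -/
noncomputable def kernel (n k : ℕ) : ℝ :=
  (n.factorial : ℝ) ^ 6 * ((n + k).factorial : ℝ) ^ 4 /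
    (((2 * n).factorial : ℝ) * ((2 * n + k + 1).factorial : ℝ) ^ 4)

/-- The summand interpolating between `1 / (k + 1) ^ 3` (at `n = 0`) and `0` (as `n → ∞`). -/
noncomputable def wzG (n k : ℕ) : ℝ :=
  (-1) ^ n * kernel n k * ((3 * n + 2 * k + 2) / 2)

/-- The numerator of the certificate of the pair. -/
def certNum (n k : ℝ) : ℝ :=
  (n + 1) ^ 4 * (205 * n ^ 2 + 250 * n + 77)
    + (574 * n ^ 5 + 2486 * n ^ 4 + 4268 * n ^ 3 + 3628 * n ^ 2 + 1526 * n + 254) * k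
    + (664 * n ^ 4 + 2288 * n ^ 3 + 2928 * n ^ 2 + 1648 * n + 344) * k ^ 2
    + (408 * n ^ 3 + 1048 * n ^ 2 + 888 * n + 248) * k ^ 3
    + (141 * n ^ 2 + 240 * n + 101) * k ^ 4 + (26 * n + 22) * k ^ 5 + 2 * k ^ 6

/-- The companion of `wzG`. -/
noncomputable def wzF (n k : ℕ) : ℝ :=
  (-1) ^ n * kernel n k * (certNum n k / (4 * (2 * n + 1) * (2 * n + k + 2) ^ 4))

lemma kernel_pos (n k : ℕ) : 0 < kernel n k := by
  unfold kernel; positivity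

lemma kernel_succ_right (n k : ℕ) :
    kernel n (k + 1) = kernel n k * ((n + k + 1) ^ 4 / (2 * n + k + 2) ^ 4) := by
  unfold kernel
  rw [show n + (k + 1) = (n + k) + 1 by ring, show 2 * n + (k + 1) + 1 = (2 * n + k + 1) + 1 by ring,
    Nat.factorial_succ (n + k), Nat.factorial_succ (2 * n + k + 1)]
  push_cast
  rw [show (2 * n + k + 1 + 1 : ℝ) = 2 * n + k + 2 by ring]
  field_simp

lemma kernel_succ_left (n k : ℕ) :
    kernel (n + 1) k = kernel n k * ((n + 1) ^ 5 * (n + k + 1) ^ 4 /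
      (2 * (2 * n + 1) * (2 * n + k + 2) ^ 4 * (2 * n + k + 3) ^ 4)) := by
  unfold kernel
  rw [show n + 1 + k = (n + k) + 1 by ring, show 2 * (n + 1) + k + 1 = (2 * n + k + 1) + 1 + 1 by ring,
    show 2 * (n + 1) = 2 * n + 1 + 1 by ring,
    Nat.factorial_succ (n + k), Nat.factorial_succ (2 * n + k + 1 + 1),
    Nat.factorial_succ (2 * n + k + 1), Nat.factorial_succ (2 * n + 1), Nat.factorial_succ (2 * n),
    Nat.factorial_succ n]
  push_cast
  rw [show (2 * n + k + 1 + 1 + 1 : ℝ) = 2 * n + k + 3 by ring,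
    show (2 * n + k + 1 + 1 : ℝ) = 2 * n + k + 2 by ring,
    show (2 * n + 1 + 1 : ℝ) = 2 * (n + 1) by ring]
  field_simp

lemma wzF_sub_wzF (n k : ℕ) : wzF n (k + 1) - wzF n k = wzG (n + 1) k - wzG n k := by
  unfold wzF wzG
  rw [kernel_succ_right, kernel_succ_left]
  unfold certNum
  push_cast
  rw [show (2 * n + (k + 1) + 2 : ℝ) = 2 * n + k + 3 by ring, pow_succ (-1 : ℝ) n]
  field_simp
  ring

lemma wzG_zero (k : ℕ) : wzG 0 k = 1 / ((k : ℝ) + 1) ^ 3 := by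
  simp only [wzG, kernel, Nat.factorial_succ, mul_zero, zero_add, Nat.factorial_zero]
  push_cast
  field_simp
  ring

lemma wzF_zero_right (n : ℕ) :
    wzF n 0 = (-1 : ℝ) ^ n * ((n.factorial : ℝ)) ^ 10 *
      (205 * (n : ℝ) ^ 2 + 250 * (n : ℝ) + 77) / (64 * ((2 * n + 1).factorial : ℝ) ^ 5) := by
  simp only [wzF, kernel, certNum, Nat.factorial_succ, add_zero]
  push_cast
  rw [show (2 * n + 0 + 2 : ℝ) = 2 * (n + 1) by ring]
  field_simp
  ring

lemma abs_wzG (n k : ℕ) : |wzG n k| = kernel n k * ((3 * n + 2 * k + 2) / 2) := by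
  have := kernel_pos n k
  rw [wzG, abs_mul, abs_mul, abs_pow, abs_neg, abs_one, one_pow, one_mul, abs_of_pos this,
    abs_of_nonneg (by positivity)]

lemma abs_wzG_succ_le (n k : ℕ) : |wzG (n + 1) k| ≤ 1 / 2 * |wzG n k| := by
  have hn : (0 : ℝ) ≤ n := n.cast_nonneg
  have hk : (0 : ℝ) ≤ k := k.cast_nonneg
  rw [abs_wzG, abs_wzG, kernel_succ_left, mul_assoc, mul_left_comm (1 / 2 : ℝ)]
  refine mul_le_mul_of_nonneg_left ?_ (kernel_pos n k).le
  have h1 : ((n : ℝ) + 1) ^ 5 ≤ (2 * n + 1) * (2 * n + k + 2) ^ 4 := by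
    have : ((n : ℝ) + 1) ^ 4 ≤ (2 * n + k + 2) ^ 4 := by gcongr <;> linarith
    calc ((n : ℝ) + 1) ^ 5 = (n + 1) * (n + 1) ^ 4 := by ring
      _ ≤ _ := by gcongr; linarith
  have h2 : ((n : ℝ) + k + 1) ^ 4 * (3 * n + 2 * k + 5)
      ≤ (2 * n + k + 3) ^ 4 * (3 * n + 2 * k + 2) := by
    have : ((n : ℝ) + k + 1) ^ 3 ≤ (2 * n + k + 3) ^ 3 := by gcongr <;> linarith
    calc ((n : ℝ) + k + 1) ^ 4 * (3 * n + 2 * k + 5)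
        = ((n : ℝ) + k + 1) ^ 3 * ((n + k + 1) * (3 * n + 2 * k + 5)) := by ring
      _ ≤ (2 * (n : ℝ) + k + 3) ^ 3 * ((2 * n + k + 3) * (3 * n + 2 * k + 2)) := by
        refine mul_le_mul this ?_ (by positivity) (by positivity)
        nlinarith [mul_nonneg hn hk, mul_nonneg hn hn, mul_nonneg hk hk]
      _ = _ := by ring
  push_cast
  rw [div_mul_div_comm, div_mul_div_comm, div_le_div_iff₀ (by positivity) (by positivity)]
  have h3 := mul_le_mul h1 h2 (by positivity) (by positivity)
  linarith

lemma abs_wzG_le (n k : ℕ) : |wzG n k| ≤ (1 / 2) ^ n * (1 / ((k : ℝ) + 1) ^ 3) := by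
  induction n with
  | zero => rw [wzG_zero, abs_of_nonneg (by positivity), pow_zero, one_mul]
  | succ n ih =>
    calc |wzG (n + 1) k| ≤ 1 / 2 * |wzG n k| := abs_wzG_succ_le n k
      _ ≤ 1 / 2 * ((1 / 2) ^ n * (1 / ((k : ℝ) + 1) ^ 3)) := by gcongr
      _ = _ := by ring

lemma certNum_nonneg (n k : ℕ) : 0 ≤ certNum n k := by
  unfold certNum; positivity

lemma certNum_le (n k : ℕ) : certNum n k ≤ 205 * (2 * n + k + 2) ^ 6 := by
  have h : certNum n k ≤ 205 * (n + k + 1) ^ 6 := by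
    rw [← sub_nonneg]
    unfold certNum
    ring_nf
    positivity
  refine h.trans ?_
  gcongr <;> linarith [(n.cast_nonneg : (0 : ℝ) ≤ n)]

lemma abs_wzF_le (n k : ℕ) : |wzF n k| ≤ 205 * (n + 1) * (1 / ((k : ℝ) + 1) ^ 2) := by
  have hn : (0 : ℝ) ≤ n := n.cast_nonneg
  have hk : (0 : ℝ) ≤ k := k.cast_nonneg
  have hK := kernel_pos n k
  have hc := certNum_nonneg n k
  have hG : kernel n k * ((3 * n + 2 * k + 2) / 2) ≤ 1 / ((k : ℝ) + 1) ^ 3 := by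
    rw [← abs_wzG]
    refine (abs_wzG_le n k).trans (mul_le_of_le_one_left (by positivity) ?_)
    exact pow_le_one₀ (by norm_num) (by norm_num)
  have hcert : certNum n k / (4 * (2 * n + 1) * (2 * n + k + 2) ^ 4)
      ≤ (3 * n + 2 * k + 2) / 2 * (205 * (n + 1) * (k + 1)) := by
    rw [div_le_iff₀ (by positivity)]
    have h1 : (2 * n + k + 2 : ℝ) ≤ 3 * n + 2 * k + 2 := by linarith
    have h2 : (2 * n + k + 2 : ℝ) ≤ 2 * (n + 1) * (k + 1) := by nlinarith [mul_nonneg hn hk]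
    have h3 : (1 : ℝ) ≤ 2 * n + 1 := by linarith
    calc certNum n k ≤ 205 * (2 * n + k + 2) ^ 6 := certNum_le n k
      _ = 205 * 1 * (2 * n + k + 2) * (2 * n + k + 2) * (2 * n + k + 2) ^ 4 := by ring
      _ ≤ 205 * (2 * n + 1) * (3 * n + 2 * k + 2) * (2 * (n + 1) * (k + 1))
          * (2 * n + k + 2) ^ 4 := by gcongr
      _ = _ := by ring
  rw [wzF, abs_mul, abs_mul, abs_pow, abs_neg, abs_one, one_pow, one_mul, abs_of_pos hK,
    abs_of_nonneg (by positivity)]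
  calc kernel n k * (certNum n k / (4 * (2 * n + 1) * (2 * n + k + 2) ^ 4))
      ≤ kernel n k * ((3 * n + 2 * k + 2) / 2 * (205 * (n + 1) * (k + 1))) := by gcongr
    _ = kernel n k * ((3 * n + 2 * k + 2) / 2) * (205 * (n + 1) * (k + 1)) := by ring
    _ ≤ 1 / ((k : ℝ) + 1) ^ 3 * (205 * (n + 1) * (k + 1)) := by gcongr
    _ = _ := by field_simp

lemma tendsto_wzF (n : ℕ) : Tendsto (wzF n) atTop (𝓝 0) := by
  refine squeeze_zero_norm (abs_wzF_le n) ?_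
  have h := (tendsto_one_div_add_atTop_nhds_zero_nat (𝕜 := ℝ)).pow 2
  simpa [one_div] using h.const_mul (205 * ((n : ℝ) + 1))

lemma summable_one_div_succ_pow_three : Summable fun k : ℕ => 1 / ((k : ℝ) + 1) ^ 3 := by
  have h := (summable_nat_add_iff 1).2 (Real.summable_one_div_nat_pow.2 (by norm_num : 1 < 3))
  simpa using h

lemma summable_wzG (n : ℕ) : Summable (wzG n) :=
  .of_norm_bounded (summable_one_div_succ_pow_three.mul_left _) (abs_wzG_le n)

lemma abs_tsum_wzG_le (n : ℕ) :
    |∑' k, wzG n k| ≤ (1 / 2) ^ n * ∑' k : ℕ, 1 / ((k : ℝ) + 1) ^ 3 := by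
  rw [← tsum_mul_left]
  exact tsum_of_norm_bounded (f := wzG n) (summable_one_div_succ_pow_three.mul_left _).hasSum
    (abs_wzG_le n)

lemma wzF_zero_right_eq_sub (n : ℕ) : wzF n 0 = ∑' k, wzG n k - ∑' k, wzG (n + 1) k := by
  have h1 := ((summable_wzG n).hasSum.sub (summable_wzG (n + 1)).hasSum).tendsto_sum_nat
  have h2 : ∀ N, ∑ k ∈ Finset.range N, (wzG n k - wzG (n + 1) k) = wzF n 0 - wzF n N := by
    intro N
    rw [← Finset.sum_range_sub']
    exact Finset.sum_congr rfl fun k _ => by linarith [wzF_sub_wzF n k]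
  simp only [h2] at h1
  have h3 := (tendsto_wzF n).const_sub (wzF n 0)
  rw [sub_zero] at h3
  exact tendsto_nhds_unique h3 h1

lemma summable_wzF_zero_right : Summable fun n => wzF n 0 := by
  have hS : Summable fun n => ∑' k, wzG n k :=
    .of_norm_bounded (summable_geometric_two.mul_right _) abs_tsum_wzG_le
  simp only [wzF_zero_right_eq_sub]
  exact hS.sub ((summable_nat_add_iff 1).2 hS)

lemma tsum_wzF_zero_right : ∑' n, wzF n 0 = ∑' k, wzG 0 k := by
  have h1 := summable_wzF_zero_right.hasSum.tendsto_sum_nat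
  simp only [wzF_zero_right_eq_sub, Finset.sum_range_sub'] at h1
  have h0 : Tendsto (fun n => ∑' k, wzG n k) atTop (𝓝 0) := by
    refine squeeze_zero_norm abs_tsum_wzG_le ?_
    simpa only [zero_mul] using (tendsto_pow_atTop_nhds_zero_of_lt_one (r := (1 / 2 : ℝ)) (by norm_num)
      (by norm_num)).mul_const (∑' k : ℕ, 1 / ((k : ℝ) + 1) ^ 3)
  have h2 := h0.const_sub (∑' k, wzG 0 k)
  rw [sub_zero] at h2
  simpa only [wzF_zero_right_eq_sub] using tendsto_nhds_unique h1 h2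

end AmdeberhanZeilberger

theorem amdeberhan_zeilberger_zeta_three :
    (∑' n : ℕ, 1 / ((n : ℝ) + 1) ^ 3)
      = ∑' n : ℕ,
          (-1 : ℝ) ^ n * ((n.factorial : ℝ)) ^ 10 *
            (205 * (n : ℝ) ^ 2 + 250 * (n : ℝ) + 77) /
              (64 * ((2 * n + 1).factorial : ℝ) ^ 5) := by
  simp only [← AmdeberhanZeilberger.wzG_zero, ← AmdeberhanZeilberger.wzF_zero_right]
  exact AmdeberhanZeilberger.tsum_wzF_zero_right.symm
end

section
/- Let a, b, c, d ∈ ℝ, set t := c + d − a − b − 1, and let x ∈ ℕ satisfy 2x + t ≠ 0 and 2x + t + 1 ≠ 0. Then, as q → 1 with q ∈ (0,1), the quantity (1 − q^{2x+t}(q^a + q^b + q) + q^{3x+t}(q^c + q^d)) / ((1 − q^{2x+t})(1 − q^{2x+t+1})) tends to p(a,b,c,d,x) / ((2x+t)(2x+t+1)), where p(a,b,c,d,x) = (2x+t+a)(2x+t+b) − (x+c−1)(x+d−1). -/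
open Filter Topology

/-- Second-order expansion of `exp (α * h)` at `h = 0`, as a limit. -/
lemma tendsto_exp_mul_sub_one_sub_div_sq (α : ℝ) :
    Tendsto (fun h : ℝ => (Real.exp (α * h) - 1 - α * h) / h ^ 2) (𝓝[≠] 0) (𝓝 (α ^ 2 / 2)) := by
  have hlin : Tendsto (fun h : ℝ => α * h) (𝓝 0) (𝓝 0) := by
    simpa using (continuous_const_mul α).tendsto 0
  have hexp := (Real.exp_sub_sum_range_succ_isLittleO_pow 2).comp_tendsto hlin
  have hsq : (fun h : ℝ => (α * h) ^ 2) =O[𝓝 0] fun h : ℝ => h ^ 2 := by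
    simpa only [mul_pow] using (Asymptotics.isBigO_refl (fun h : ℝ => h ^ 2) (𝓝 0)).const_mul_left _
  have hdiv := ((hexp.trans_isBigO hsq).tendsto_div_nhds_zero.mono_left
    (nhdsWithin_le_nhds (s := {0}ᶜ))).add_const (α ^ 2 / 2)
  rw [zero_add] at hdiv
  refine hdiv.congr' ?_
  filter_upwards [self_mem_nhdsWithin] with h hh
  have hh : h ≠ 0 := hh
  simp only [Function.comp_apply, Finset.sum_range_succ, Finset.sum_range_zero, Nat.factorial]
  field_simp
  push_cast
  ring

lemma tendsto_exp_mul_sub_one_div (α : ℝ) :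
    Tendsto (fun h : ℝ => (Real.exp (α * h) - 1) / h) (𝓝[≠] 0) (𝓝 α) := by
  have hd : HasDerivAt (fun h : ℝ => Real.exp (α * h)) α 0 := by
    simpa using ((hasDerivAt_id (0 : ℝ)).const_mul α).exp
  simpa [slope_fun_def, div_eq_inv_mul] using hd.tendsto_slope

lemma tendsto_log_nhdsWithin_Ioo_one :
    Tendsto Real.log (𝓝[Set.Ioo (0 : ℝ) 1] 1) (𝓝[≠] 0) := by
  refine tendsto_nhdsWithin_iff.2 ⟨?_, ?_⟩
  · simpa using (Real.continuousAt_log one_ne_zero).tendsto.mono_left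
      (nhdsWithin_le_nhds (s := Set.Ioo (0 : ℝ) 1))
  · filter_upwards [self_mem_nhdsWithin] with q hq
    exact (Real.log_neg hq.1 hq.2).ne

theorem markov_lhospital_limit (a b c d : ℝ) (t : ℝ)
    (ht_def : t = c + d - a - b - 1) (x : ℕ)
    (h1 : 2 * (x : ℝ) + t ≠ 0) (h2 : 2 * (x : ℝ) + t + 1 ≠ 0) :
    Tendsto
      (fun q : ℝ =>
        (1 - q ^ (2 * (x : ℝ) + t) * (q ^ a + q ^ b + q) +
            q ^ (3 * (x : ℝ) + t) * (q ^ c + q ^ d)) /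
          ((1 - q ^ (2 * (x : ℝ) + t)) * (1 - q ^ (2 * (x : ℝ) + t + 1))))
      (𝓝[Set.Ioo (0 : ℝ) 1] 1)
      (𝓝 (((2 * (x : ℝ) + t + a) * (2 * (x : ℝ) + t + b) -
            ((x : ℝ) + c - 1) * ((x : ℝ) + d - 1)) /
          ((2 * (x : ℝ) + t) * (2 * (x : ℝ) + t + 1)))) := by
  set s : ℝ := 2 * (x : ℝ) + t with hs
  have quad := fun α => (tendsto_exp_mul_sub_one_sub_div_sq α).comp tendsto_log_nhdsWithin_Ioo_one
  have lin := fun α => (tendsto_exp_mul_sub_one_div α).comp tendsto_log_nhdsWithin_Ioo_one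
  have hnum := ((quad (3 * x + t + c)).add (quad (3 * x + t + d))).sub
    (((quad (s + a)).add (quad (s + b))).add (quad (s + 1)))
  have hlim := hnum.div ((lin s).mul (lin (s + 1))) (mul_ne_zero h1 h2)
  have hval : (3 * x + t + c) ^ 2 / 2 + (3 * x + t + d) ^ 2 / 2 -
      ((s + a) ^ 2 / 2 + (s + b) ^ 2 / 2 + (s + 1) ^ 2 / 2) =
      (s + a) * (s + b) - (x + c - 1) * (x + d - 1) := by
    rw [hs, ht_def]
    ring
  rw [hval] at hlim
  refine hlim.congr' ?_
  filter_upwards [self_mem_nhdsWithin] with q hq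
  have hlog : Real.log q ≠ 0 := (Real.log_neg hq.1 hq.2).ne
  have hexp : ∀ α, Real.exp (α * Real.log q) = q ^ α := fun α => by
    rw [Real.rpow_def_of_pos hq.1, mul_comm]
  have hN : 1 - q ^ s * (q ^ a + q ^ b + q) + q ^ (3 * (x : ℝ) + t) * (q ^ c + q ^ d) =
      ((q ^ (3 * x + t + c) - 1 - (3 * x + t + c) * Real.log q) +
        (q ^ (3 * x + t + d) - 1 - (3 * x + t + d) * Real.log q)) -
      ((q ^ (s + a) - 1 - (s + a) * Real.log q) + (q ^ (s + b) - 1 - (s + b) * Real.log q) +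
        (q ^ (s + 1) - 1 - (s + 1) * Real.log q)) := by
    have hcancel : (3 * x + t + c) + (3 * x + t + d) - ((s + a) + (s + b) + (s + 1)) = 0 := by
      rw [hs, ht_def]
      ring
    simp only [Real.rpow_add hq.1 _ c, Real.rpow_add hq.1 _ d, Real.rpow_add hq.1 s,
      Real.rpow_one]
    linear_combination Real.log q * hcancel
  simp only [Function.comp_apply, Pi.div_apply, hexp]
  rw [hN, ← add_div, ← add_div, ← add_div, ← sub_div, div_mul_div_comm, ← sq,
    div_div_div_cancel_right₀ (pow_ne_zero 2 hlog)]
  congr 1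
  ring
end
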